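/- arXiv:2311.14879 — 3 statements merged into one kernel-verified Lean document; each statement's English description precedes it below -/
import Mathlib

section
/- For every natural number m, the real vector space of maps X : Fin m → Fin m → Fin m → Fin m → ℝ satisfying X_{abcd} = −X_{bacd}, X_{abcd} = −X_{abdc}, and X_{abcd} = X_{cdab} for all indices (the space Sym of symmetric (2,2) double forms) has dimension (m² − m)(m² − m + 2)/8. -/
noncomputable section

/-- The space of symmetric (2,2) double forms on an `m`-dimensional space:
maps `X` with `X_{abcd} = -X_{bacd}`, `X_{abcd} = -X_{abdc}` and `X_{abcd} = X_{cdab}`. -/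
def symDF (m : ℕ) : Submodule ℝ (Fin m → Fin m → Fin m → Fin m → ℝ) where
  carrier := {X | (∀ a b c d, X a b c d = -X b a c d) ∧
                  (∀ a b c d, X a b c d = -X a b d c) ∧
                  (∀ a b c d, X a b c d = X c d a b)}
  add_mem' := by
    intro X Y hX hY
    obtain ⟨hx1, hx2, hx3⟩ := hX
    obtain ⟨hy1, hy2, hy3⟩ := hY
    refine ⟨fun a b c d => ?_, fun a b c d => ?_, fun a b c d => ?_⟩ <;>
      simp only [Pi.add_apply]
    · rw [hx1 a b c d, hy1 a b c d]; ring
    · rw [hx2 a b c d, hy2 a b c d]; ring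
    · rw [hx3 a b c d, hy3 a b c d]
  zero_mem' := by
    refine ⟨fun a b c d => ?_, fun a b c d => ?_, fun a b c d => ?_⟩ <;> simp
  smul_mem' := by
    intro r X hX
    obtain ⟨h1, h2, h3⟩ := hX
    refine ⟨fun a b c d => ?_, fun a b c d => ?_, fun a b c d => ?_⟩ <;>
      simp only [Pi.smul_apply, smul_eq_mul]
    · rw [h1 a b c d]; ring
    · rw [h2 a b c d]; ring
    · rw [h3 a b c d]

section AntisymmExtend

variable {R ι M N : Type*} [Ring R] [LinearOrder ι]
  [AddCommGroup M] [Module R M] [AddCommGroup N] [Module R N]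

/-- The pairs `a < b`, which index the free components `X_{ab}` of an antisymmetric array. -/
abbrev IncPair (ι : Type*) [LinearOrder ι] : Type _ := {p : ι × ι // p.1 < p.2}

theorem card_incPair [Fintype ι] : Fintype.card (IncPair ι) = (Fintype.card ι).choose 2 := by
  rw [← Sym2.card_subtype_not_diag]
  refine (Fintype.card_congr ?_).symm
  calc {s : Sym2 ι // ¬ s.IsDiag}
      ≃ {p : {p : ι × ι // p.1 ≤ p.2} // p.1.1 ≠ p.1.2} :=
        Sym2.sortEquiv.subtypeEquiv fun s => by
          induction s with | _ a b => simp [Sym2.sortEquiv, eq_comm]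
    _ ≃ {p : ι × ι // p.1 ≤ p.2 ∧ p.1 ≠ p.2} :=
        Equiv.subtypeSubtypeEquivSubtypeInter _ fun p : ι × ι => p.1 ≠ p.2
    _ ≃ IncPair ι := Equiv.subtypeEquivRight fun _ => lt_iff_le_and_ne.symm

variable (R) in
/-- The antisymmetric array `X_{ab}` with prescribed components for `a < b`. The values lie in an
arbitrary module, so that an array of arrays can be extended in its outer indices. -/
def antisymmExtend : (IncPair ι → M) →ₗ[R] ι → ι → M where
  toFun g a b := if h : a < b then g ⟨(a, b), h⟩ else if h : b < a then -g ⟨(b, a), h⟩ else 0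
  map_add' g g' := by
    ext a b
    simp only [Pi.add_apply]
    split_ifs <;> simp [add_comm]
  map_smul' r g := by
    ext a b
    simp only [Pi.smul_apply]
    split_ifs <;> simp

theorem antisymmExtend_of_lt (g : IncPair ι → M) {a b : ι} (h : a < b) :
    antisymmExtend R g a b = g ⟨(a, b), h⟩ := by
  simp [antisymmExtend, h]

theorem antisymmExtend_self (g : IncPair ι → M) (a : ι) : antisymmExtend R g a a = 0 := by
  simp [antisymmExtend]

theorem antisymmExtend_swap (g : IncPair ι → M) (a b : ι) :
    antisymmExtend R g a b = -antisymmExtend R g b a := by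
  rcases lt_trichotomy a b with h | rfl | h
  · simp [antisymmExtend, h, h.not_gt]
  · simp [antisymmExtend_self]
  · simp [antisymmExtend, h, h.not_gt]

theorem antisymmExtend_comp (L : M →ₗ[R] N) (g : IncPair ι → M) (a b : ι) :
    antisymmExtend R (fun p => L (g p)) a b = L (antisymmExtend R g a b) := by
  simp only [antisymmExtend, LinearMap.coe_mk, AddHom.coe_mk]
  split_ifs <;> simp

theorem antisymmExtend_apply {κ : Type*} (g : IncPair ι → κ → M) (a b : ι) (k : κ) :
    antisymmExtend R g a b k = antisymmExtend R (fun p => g p k) a b :=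
  (antisymmExtend_comp (LinearMap.proj k) g a b).symm

theorem diag_eq_zero_of_antisymm {α : Type*} (h2 : IsSMulRegular M (2 : ℕ)) {X : α → α → M}
    (hX : ∀ a b, X a b = -X b a) (a : α) : X a a = 0 :=
  h2 <| by simpa [two_smul] using eq_neg_iff_add_eq_zero.mp (hX a a)

theorem antisymmExtend_restrict (h2 : IsSMulRegular M (2 : ℕ)) {X : ι → ι → M}
    (hX : ∀ a b, X a b = -X b a) : antisymmExtend R (fun p => X p.1.1 p.1.2) = X := by
  ext a b
  rcases lt_trichotomy a b with h | rfl | h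
  · rw [antisymmExtend_of_lt _ h]
  · rw [antisymmExtend_self, diag_eq_zero_of_antisymm h2 hX]
  · rw [antisymmExtend_swap, antisymmExtend_of_lt _ h, hX a b]

theorem antisymmExtend_antisymmExtend_symm {f : IncPair ι → IncPair ι → M}
    (hf : ∀ p q, f p q = f q p) (a b c d : ι) :
    antisymmExtend R (fun p => antisymmExtend R (f p)) a b c d =
      antisymmExtend R (fun p => antisymmExtend R (f p)) c d a b := by
  have extend_first (q : IncPair ι) : antisymmExtend R f a b q = antisymmExtend R (f q) a b := by
    simp only [antisymmExtend_apply, hf _ q]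
  calc antisymmExtend R (fun p => antisymmExtend R (f p)) a b c d
      = antisymmExtend R (antisymmExtend R f a b) c d := by rw [antisymmExtend_comp]
    _ = antisymmExtend R (fun q => antisymmExtend R (f q) a b) c d := by
        rw [funext extend_first]
    _ = antisymmExtend R (fun q => antisymmExtend R (f q)) c d a b := by
        simp only [antisymmExtend_apply]

end AntisymmExtend

section SymDoubleForms

variable (R ι M : Type*) [Ring R] [AddCommGroup M] [Module R M]

/-- The symmetric (2,2) double forms with indices in an arbitrary type `ι` and components in an
`R`-module `M`; `symDF m` is the case `ι = Fin m`, `R = M = ℝ`. -/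
def symDoubleForms : Submodule R (ι → ι → ι → ι → M) where
  carrier := {X | (∀ a b c d, X a b c d = -X b a c d) ∧
                  (∀ a b c d, X a b c d = -X a b d c) ∧
                  (∀ a b c d, X a b c d = X c d a b)}
  add_mem' := fun ⟨hX₁, hX₂, hX₃⟩ ⟨hY₁, hY₂, hY₃⟩ =>
    ⟨fun a b c d => by simp [hX₁ a b c d, hY₁ a b c d, add_comm],
      fun a b c d => by simp [hX₂ a b c d, hY₂ a b c d, add_comm],
      fun a b c d => by simp [hX₃ a b c d, hY₃ a b c d]⟩
  zero_mem' := by simp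
  smul_mem' := fun r _ ⟨hX₁, hX₂, hX₃⟩ =>
    ⟨fun a b c d => by simp [hX₁ a b c d],
      fun a b c d => by simp [hX₂ a b c d],
      fun a b c d => by simp [hX₃ a b c d]⟩

variable {R ι M}

theorem antisymmExtend_antisymmExtend_mem_symDoubleForms [LinearOrder ι]
    {f : IncPair ι → IncPair ι → M} (hf : ∀ p q, f p q = f q p) :
    antisymmExtend R (fun p => antisymmExtend R (f p)) ∈ symDoubleForms R ι M := by
  refine ⟨fun a b c d => ?_, fun a b c d => ?_, antisymmExtend_antisymmExtend_symm hf⟩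
  · rw [antisymmExtend_swap _ a b, Pi.neg_apply, Pi.neg_apply]
  · rw [antisymmExtend_comp, antisymmExtend_swap _ c d]

/-- A symmetric double form corresponds to its components `X_{pq}` on unordered pairs `{p, q}` of
increasing pairs `p = (a < b)` and `q = (c < d)`. -/
def symDoubleFormsEquiv [LinearOrder ι] (h2 : IsSMulRegular M (2 : ℕ)) :
    symDoubleForms R ι M ≃ₗ[R] (Sym2 (IncPair ι) → M) where
  toFun X := Sym2.lift ⟨fun p q => X.1 p.1.1 p.1.2 q.1.1 q.1.2, fun _ _ => X.2.2.2 _ _ _ _⟩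
  map_add' X Y := by
    ext s
    induction s with | _ p q => simp
  map_smul' r X := by
    ext s
    induction s with | _ p q => simp
  invFun f := ⟨antisymmExtend R fun p => antisymmExtend R fun q => f s(p, q),
    antisymmExtend_antisymmExtend_mem_symDoubleForms fun _ _ => congrArg f Sym2.eq_swap⟩
  left_inv := fun ⟨X, hX₁, hX₂, _⟩ => by
    have h2' : IsSMulRegular (ι → ι → M) (2 : ℕ) := .pi fun _ => .pi fun _ => h2
    have extend_inner (a b : ι) :
        antisymmExtend R (fun q => X a b q.1.1 q.1.2) = X a b :=
      antisymmExtend_restrict h2 (hX₂ a b)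
    apply Subtype.ext
    simp only [Sym2.lift_mk, extend_inner]
    exact antisymmExtend_restrict h2' fun a b => funext₂ (hX₁ a b)
  right_inv f := by
    ext s
    induction s with
    | _ p q => simp only [Sym2.lift_mk, antisymmExtend_of_lt _ p.2, antisymmExtend_of_lt _ q.2]

end SymDoubleForms

theorem choose_two_choose_two_add_one (n : ℕ) :
    (n.choose 2 + 1).choose 2 = (n ^ 2 - n) * (n ^ 2 - n + 2) / 8 := by
  have two_mul_choose_two : n ^ 2 - n = 2 * n.choose 2 := by
    rw [Nat.choose_two_right, Nat.two_mul_div_two_of_even (Nat.even_mul_pred_self n),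
      Nat.mul_sub_one, sq]
  calc (n.choose 2 + 1).choose 2
      = (n.choose 2 + 1) * n.choose 2 / 2 := by rw [Nat.choose_two_right, Nat.add_sub_cancel]
    _ = 4 * ((n.choose 2 + 1) * n.choose 2) / (4 * 2) :=
        (Nat.mul_div_mul_left _ _ four_pos).symm
    _ = (n ^ 2 - n) * (n ^ 2 - n + 2) / 8 := by
        rw [two_mul_choose_two]
        congr 1
        ring

theorem dim_symDF_general (R ι : Type*) [Ring R] [StrongRankCondition R] [Fintype ι]
    (h2 : IsSMulRegular R (2 : ℕ)) :
    Module.finrank R (symDoubleForms R ι R) =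
      (Fintype.card ι ^ 2 - Fintype.card ι) * (Fintype.card ι ^ 2 - Fintype.card ι + 2) / 8 := by
  let : LinearOrder ι := .lift' (Fintype.equivFin ι) (Fintype.equivFin ι).injective
  rw [(symDoubleFormsEquiv h2).finrank_eq, Module.finrank_fintype_fun_eq_card, Sym2.card,
    card_incPair, choose_two_choose_two_add_one]

/-- The space `Sym` of symmetric (2,2) double forms has dimension
`(m² − m)(m² − m + 2)/8`. -/
theorem dim_symDF (m : ℕ) :
    Module.finrank ℝ (symDF m) = (m ^ 2 - m) * (m ^ 2 - m + 2) / 8 := by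
  have symDF_eq : symDF m = symDoubleForms ℝ (Fin m) ℝ := rfl
  rw [symDF_eq, dim_symDF_general ℝ (Fin m) (nsmul_right_injective two_ne_zero), Fintype.card_fin]
end
end

section
/- For every natural number m, the real vector space of maps X : Fin m → Fin m → Fin m → Fin m → ℝ satisfying X_{abcd} = −X_{bacd}, X_{abcd} = −X_{abdc}, and the first algebraic Bianchi identity X_{abcd} + X_{acdb} + X_{adbc} = 0 for all indices (the space Curv of algebraic curvature tensors) has dimension m²(m² − 1)/12. -/
noncomputable section

/-- The space of algebraic curvature tensors on an `m`-dimensional space: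
maps `X` with `X_{abcd} = -X_{bacd}`, `X_{abcd} = -X_{abdc}` and the first
algebraic Bianchi identity `X_{abcd} + X_{acdb} + X_{adbc} = 0`. -/
def curvDF (m : ℕ) : Submodule ℝ (Fin m → Fin m → Fin m → Fin m → ℝ) where
  carrier := {X | (∀ a b c d, X a b c d = -X b a c d) ∧
                  (∀ a b c d, X a b c d = -X a b d c) ∧
                  (∀ a b c d, X a b c d + X a c d b + X a d b c = 0)}
  add_mem' := by
    intro X Y hX hY
    obtain ⟨hx1, hx2, hx3⟩ := hX
    obtain ⟨hy1, hy2, hy3⟩ := hY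
    refine ⟨fun a b c d => ?_, fun a b c d => ?_, fun a b c d => ?_⟩ <;>
      simp only [Pi.add_apply]
    · rw [hx1 a b c d, hy1 a b c d]; ring
    · rw [hx2 a b c d, hy2 a b c d]; ring
    · have := hx3 a b c d
      have := hy3 a b c d
      linarith
  zero_mem' := by
    refine ⟨fun a b c d => ?_, fun a b c d => ?_, fun a b c d => ?_⟩ <;> simp
  smul_mem' := by
    intro r X hX
    obtain ⟨h1, h2, h3⟩ := hX
    refine ⟨fun a b c d => ?_, fun a b c d => ?_, fun a b c d => ?_⟩ <;>
      simp only [Pi.smul_apply, smul_eq_mul]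
    · rw [h1 a b c d]; ring
    · rw [h2 a b c d]; ring
    · linear_combination r * h3 a b c d
  
/-!
Let `s`, `t`, `u` exchange the first two indices, the last two indices and the two index pairs of a
four-index array, and let `b` be the Bianchi sum. Then `S = (1 - s) (1 - t) (1 + u)` is `8` times a
projection onto `Sym²(Λ²)`, `b S` is the full alternation, that is `24` times the projection onto
`Λ⁴`, and `(3 - b) S / 24` is a projection onto the algebraic curvature tensors. The dimension of
its range is its trace, and a permutation of the indices contributes to this trace the number of
index quadruples it fixes.
-/

/-- Arrays `X a b c d` with four indices in `ι` and entries in `R`: the coordinates of a covariant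
`4`-tensor. -/
abbrev FourTensor (ι R : Type*) := ι → ι → ι → ι → R

namespace FourTensor

section CommRing

variable {ι R : Type*} [CommRing R]

/-- The substitution of indices by `f`, which may be any self-map of the set of index quadruples. -/
def reindex (f : ι × ι × ι × ι → ι × ι × ι × ι) : Module.End R (FourTensor ι R) where
  toFun X a b c d :=
    let (a', b', c', d') := f (a, b, c, d)
    X a' b' c' d'
  map_add' _ _ := rfl
  map_smul' _ _ := rfl

theorem reindex_id : (reindex id : Module.End R (FourTensor ι R)) = 1 :=
  rfl

theorem reindex_mul_reindex (f g : ι × ι × ι × ι → ι × ι × ι × ι) :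
    (reindex f * reindex g : Module.End R (FourTensor ι R)) = reindex (g ∘ f) :=
  rfl

theorem trace_reindex [Fintype ι] [DecidableEq ι] (f : ι × ι × ι × ι → ι × ι × ι × ι) :
    LinearMap.trace R (FourTensor ι R) (reindex f) =
      ∑ a, ∑ b, ∑ c, ∑ d, if f (a, b, c, d) = (a, b, c, d) then 1 else 0 := by
  rw [LinearMap.trace_eq_matrix_trace R (Pi.basis fun _ : ι => Pi.basis fun _ : ι =>
    Pi.basis fun _ : ι => Pi.basisFun R ι)]
  simp only [Matrix.trace, Matrix.diag_apply, LinearMap.toMatrix_apply, Fintype.sum_sigma]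
  simp [Pi.basis_apply, Pi.basis_repr, reindex, Pi.single_apply, ite_apply, ← ite_and,
    Prod.ext_iff, and_assoc]

variable (ι R)

/-- The exchange of the first two indices. -/
def swapFst : Module.End R (FourTensor ι R) :=
  reindex fun (a, b, c, d) => (b, a, c, d)

/-- The exchange of the last two indices. -/
def swapSnd : Module.End R (FourTensor ι R) :=
  reindex fun (a, b, c, d) => (a, b, d, c)

/-- The exchange of the first pair of indices with the last pair. -/
def swapPairs : Module.End R (FourTensor ι R) :=
  reindex fun (a, b, c, d) => (c, d, a, b)

/-- The cyclic permutation of the last three indices. -/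
def cycleLast : Module.End R (FourTensor ι R) :=
  reindex fun (a, b, c, d) => (a, c, d, b)

/-- The left-hand side of the first Bianchi identity. -/
def bianchiSum : Module.End R (FourTensor ι R) :=
  1 + cycleLast ι R + cycleLast ι R ^ 2

/-- The symmetrization onto symmetric bilinear forms on bivectors, not normalized: it is `8` times
a projection. -/
def pairSymmetrizer : Module.End R (FourTensor ι R) :=
  (1 - swapFst ι R) * (1 - swapSnd ι R) * (1 + swapPairs ι R)

/-- The algebraic curvature tensors with index set `ι` and entries in `R`, as the common kernel of
the operators that express the two skew symmetries and the first Bianchi identity. -/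
def curvatureTensor : Submodule R (FourTensor ι R) :=
  (1 + swapFst ι R).ker ⊓ (1 + swapSnd ι R).ker ⊓ (bianchiSum ι R).ker

variable {ι R}

theorem swapFst_apply (X : FourTensor ι R) (a b c d : ι) :
    swapFst ι R X a b c d = X b a c d :=
  rfl

theorem swapSnd_apply (X : FourTensor ι R) (a b c d : ι) :
    swapSnd ι R X a b c d = X a b d c :=
  rfl

theorem swapPairs_apply (X : FourTensor ι R) (a b c d : ι) :
    swapPairs ι R X a b c d = X c d a b :=
  rfl

theorem bianchiSum_apply (X : FourTensor ι R) (a b c d : ι) :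
    bianchiSum ι R X a b c d = X a b c d + X a c d b + X a d b c :=
  rfl

theorem pairSymmetrizer_apply (X : FourTensor ι R) (a b c d : ι) :
    pairSymmetrizer ι R X a b c d =
      X a b c d - X b a c d - X a b d c + X b a d c
        + X c d a b - X c d b a - X d c a b + X d c b a := by
  simp only [pairSymmetrizer, Module.End.mul_apply, LinearMap.sub_apply, LinearMap.add_apply,
    Module.End.one_apply, Pi.sub_apply, Pi.add_apply, swapFst_apply, swapSnd_apply,
    swapPairs_apply]
  ring

theorem mem_curvatureTensor_iff {X : FourTensor ι R} :
    X ∈ curvatureTensor ι R ↔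
      (∀ a b c d, X a b c d = -X b a c d) ∧ (∀ a b c d, X a b c d = -X a b d c) ∧
        ∀ a b c d, X a b c d + X a c d b + X a d b c = 0 := by
  simp [curvatureTensor, funext_iff, bianchiSum_apply, swapFst_apply, swapSnd_apply,
    eq_neg_iff_add_eq_zero, and_assoc]

theorem pairSymmetrizer_skew_fst (X : FourTensor ι R) (a b c d : ι) :
    pairSymmetrizer ι R X a b c d = -pairSymmetrizer ι R X b a c d := by
  simp only [pairSymmetrizer_apply]
  ring

theorem pairSymmetrizer_skew_snd (X : FourTensor ι R) (a b c d : ι) :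
    pairSymmetrizer ι R X a b c d = -pairSymmetrizer ι R X a b d c := by
  simp only [pairSymmetrizer_apply]
  ring

theorem pairSymmetrizer_pair_symm (X : FourTensor ι R) (a b c d : ι) :
    pairSymmetrizer ι R X a b c d = pairSymmetrizer ι R X c d a b := by
  simp only [pairSymmetrizer_apply]
  ring

theorem bianchiSum_skew_snd {Y : FourTensor ι R} (hsnd : ∀ a b c d, Y a b c d = -Y a b d c)
    (a b c d : ι) : bianchiSum ι R Y a b c d = -bianchiSum ι R Y a b d c := by
  simp only [bianchiSum_apply]
  linear_combination hsnd a b c d + hsnd a c d b + hsnd a d b c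

theorem bianchiSum_skew_fst {Y : FourTensor ι R} (hfst : ∀ a b c d, Y a b c d = -Y b a c d)
    (hsnd : ∀ a b c d, Y a b c d = -Y a b d c) (hpair : ∀ a b c d, Y a b c d = Y c d a b)
    (a b c d : ι) : bianchiSum ι R Y a b c d = -bianchiSum ι R Y b a c d := by
  simp only [bianchiSum_apply]
  linear_combination hfst a b c d + hpair a c d b + hfst d b a c + hpair a d b c
    + hsnd b c a d

theorem bianchiSum_bianchiSum (Y : FourTensor ι R) :
    bianchiSum ι R (bianchiSum ι R Y) = (3 : R) • bianchiSum ι R Y := by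
  funext a b c d
  simp only [bianchiSum_apply, Pi.smul_apply, smul_eq_mul]
  ring

theorem three_smul_sub_bianchiSum_mem_curvatureTensor {Y : FourTensor ι R}
    (hfst : ∀ a b c d, Y a b c d = -Y b a c d) (hsnd : ∀ a b c d, Y a b c d = -Y a b d c)
    (hpair : ∀ a b c d, Y a b c d = Y c d a b) :
    (3 : R) • Y - bianchiSum ι R Y ∈ curvatureTensor ι R := by
  have hbianchi : bianchiSum ι R ((3 : R) • Y - bianchiSum ι R Y) = 0 := by
    rw [LinearMap.map_sub, LinearMap.map_smul, bianchiSum_bianchiSum, sub_self]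
  refine mem_curvatureTensor_iff.2 ⟨fun a b c d => ?_, fun a b c d => ?_, fun a b c d => ?_⟩
  · simp only [Pi.sub_apply, Pi.smul_apply, smul_eq_mul]
    linear_combination 3 * hfst a b c d - bianchiSum_skew_fst hfst hsnd hpair a b c d
  · simp only [Pi.sub_apply, Pi.smul_apply, smul_eq_mul]
    linear_combination 3 * hsnd a b c d - bianchiSum_skew_snd hsnd a b c d
  · rw [← bianchiSum_apply, hbianchi]
    rfl

-- The octahedron argument: the alternating sum of the Bianchi identities at the four cyclic
-- rotations of `a b c d`, in which the skew symmetries cancel all but these two terms.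
theorem two_mul_pair_symm {X : FourTensor ι R} (hX : X ∈ curvatureTensor ι R)
    (a b c d : ι) : 2 * X a b c d = 2 * X c d a b := by
  obtain ⟨hfst, hsnd, hbianchi⟩ := mem_curvatureTensor_iff.1 hX
  linear_combination hbianchi a b c d - hbianchi b c d a - hbianchi c d a b + hbianchi d a b c
    + hfst a b c d - hfst c d a b - hfst a d b c + hfst b c d a - hsnd a c d b + hfst c a b d
    + hfst b d a c - hsnd d b a c

theorem pairSymmetrizer_of_mem {X : FourTensor ι R} (hX : X ∈ curvatureTensor ι R) :
    pairSymmetrizer ι R X = (8 : R) • X := by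
  obtain ⟨hfst, hsnd, -⟩ := mem_curvatureTensor_iff.1 hX
  have hskew (a b c d : ι) : X a b c d - X b a c d - X a b d c + X b a d c = 4 * X a b c d := by
    linear_combination -2 * hfst a b c d - hsnd a b c d + hsnd b a c d
  funext a b c d
  simp only [pairSymmetrizer_apply, Pi.smul_apply, smul_eq_mul]
  linear_combination hskew a b c d + hskew c d a b - 2 * two_mul_pair_symm hX a b c d

theorem bianchiSum_of_mem {X : FourTensor ι R} (hX : X ∈ curvatureTensor ι R) :
    bianchiSum ι R X = 0 :=
  hX.2

variable (ι R)

-- With `n = Fintype.card ι` and `N = n (n - 1) / 2`, this is `8` times the dimension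
-- `N (N + 1) / 2` of `Sym²(Λ²)`.
theorem trace_pairSymmetrizer [Fintype ι] :
    LinearMap.trace R (FourTensor ι R) (pairSymmetrizer ι R) =
      Fintype.card ι * (Fintype.card ι - 1) * (Fintype.card ι * (Fintype.card ι - 1) + 2) := by
  classical
  simp only [pairSymmetrizer, swapFst, swapSnd, swapPairs, ← reindex_id, mul_add, mul_sub, sub_mul,
    reindex_mul_reindex, map_add, map_sub, trace_reindex]
  simp only [Function.comp_apply, id_eq, Prod.mk.injEq, true_and, and_true, ite_and, if_true]
  simp only [Finset.sum_const, Finset.card_univ, nsmul_eq_mul, mul_ite, mul_one, mul_zero,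
    Finset.sum_ite_irrel, Finset.sum_ite_eq', Finset.mem_univ, if_true, Finset.sum_ite_eq]
  ring

-- With `n = Fintype.card ι`, this is `24` times the dimension `n.choose 4` of `Λ⁴`.
theorem trace_bianchiSum_mul_pairSymmetrizer [Fintype ι] :
    LinearMap.trace R (FourTensor ι R) (bianchiSum ι R * pairSymmetrizer ι R) =
      Fintype.card ι * (Fintype.card ι - 1) * (Fintype.card ι - 2) * (Fintype.card ι - 3) := by
  classical
  simp only [bianchiSum, cycleLast, pairSymmetrizer, swapFst, swapSnd, swapPairs, ← reindex_id,
    pow_two, mul_add, add_mul, mul_sub, sub_mul, reindex_mul_reindex, map_add, map_sub,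
    trace_reindex]
  simp only [Function.comp_apply, id_eq, Prod.mk.injEq, true_and, and_true, ite_and, if_true]
  simp only [Finset.sum_const, Finset.card_univ, nsmul_eq_mul, mul_ite, mul_one, mul_zero,
    Finset.sum_ite_irrel, Finset.sum_ite_eq', Finset.mem_univ, if_true, Finset.sum_ite_eq]
  ring

end CommRing

section Field

variable (ι K : Type*) [Field K]

/-- The endomorphism `(3 - b) S / 24`, where `b` is the Bianchi sum and `S` the pair symmetrizer. It
projects all four-index arrays onto the algebraic curvature tensors. -/
def curvatureProj : Module.End K (FourTensor ι K) :=
  (24⁻¹ : K) • ((3 : K) • pairSymmetrizer ι K - bianchiSum ι K * pairSymmetrizer ι K)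

variable {K}

theorem isProj_curvatureProj (h24 : (24 : K) ≠ 0) :
    LinearMap.IsProj (curvatureTensor ι K) (curvatureProj ι K) where
  map_mem X := Submodule.smul_mem _ _ <| three_smul_sub_bianchiSum_mem_curvatureTensor
    (pairSymmetrizer_skew_fst X) (pairSymmetrizer_skew_snd X) (pairSymmetrizer_pair_symm X)
  map_id X hX := by
    calc curvatureProj ι K X
        = (24⁻¹ : K) • ((3 : K) • pairSymmetrizer ι K X
            - bianchiSum ι K (pairSymmetrizer ι K X)) := rfl
      _ = (24⁻¹ : K) • (24 : K) • X := by
        rw [pairSymmetrizer_of_mem hX, map_smul, bianchiSum_of_mem hX, smul_zero, sub_zero,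
          smul_smul (3 : K)]
        norm_num
      _ = X := inv_smul_smul₀ h24 X

variable [Fintype ι]

theorem twelve_mul_trace_curvatureProj (h24 : (24 : K) ≠ 0) :
    12 * LinearMap.trace K (FourTensor ι K) (curvatureProj ι K) =
      Fintype.card ι ^ 2 * (Fintype.card ι ^ 2 - 1) := by
  rw [curvatureProj, map_smul, map_sub, map_smul, trace_pairSymmetrizer,
    trace_bianchiSum_mul_pairSymmetrizer, smul_eq_mul, smul_eq_mul]
  linear_combination
    (Fintype.card ι ^ 2 * (Fintype.card ι ^ 2 - 1) : K) * mul_inv_cancel₀ h24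

theorem twelve_mul_finrank_curvatureTensor (h24 : (24 : K) ≠ 0) :
    12 * (Module.finrank K (curvatureTensor ι K) : K) =
      Fintype.card ι ^ 2 * (Fintype.card ι ^ 2 - 1) := by
  rw [← (isProj_curvatureProj ι h24).trace, twelve_mul_trace_curvatureProj ι h24]

end Field

theorem curvDF_eq_curvatureTensor (m : ℕ) : curvDF m = curvatureTensor (Fin m) ℝ :=
  Submodule.ext fun _ => mem_curvatureTensor_iff.symm

end FourTensor

theorem dim_curvDF_general (K ι : Type*) [Field K] [CharZero K] [Fintype ι] :
    Module.finrank K (FourTensor.curvatureTensor ι K) =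
      Fintype.card ι ^ 2 * (Fintype.card ι ^ 2 - 1) / 12 := by
  set r := Module.finrank K (FourTensor.curvatureTensor ι K)
  have hr : 12 * (r : K) = Fintype.card ι ^ 2 * (Fintype.card ι ^ 2 - 1) :=
    FourTensor.twelve_mul_finrank_curvatureTensor ι (by norm_num)
  have hnat : 12 * r + Fintype.card ι ^ 2 = Fintype.card ι ^ 2 * Fintype.card ι ^ 2 := by
    have : (12 * r + Fintype.card ι ^ 2 : K) = Fintype.card ι ^ 2 * Fintype.card ι ^ 2 := by
      linear_combination hr
    exact_mod_cast this
  rw [Nat.mul_sub, mul_one]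
  omega

/-- The space `Curv` of algebraic curvature tensors has dimension `m²(m² − 1)/12`. -/
theorem dim_curvDF (m : ℕ) :
    Module.finrank ℝ (curvDF m) = m ^ 2 * (m ^ 2 - 1) / 12 := by
  rw [FourTensor.curvDF_eq_curvatureTensor]
  simpa only [Fintype.card_fin] using dim_curvDF_general ℝ (Fin m)
end
end

section
/- (Generalised Ruse–Lanczos identity) Let X be a (2,2) double form on 4-dimensional Minkowski space. Then for all a,b,c,d: ⋆⋆X_{abcd} + X_{cdab} = η_{ac} X̂_{db} − η_{ad} X̂_{cb} + η_{bd} X̂_{ca} − η_{bc} X̂_{da}, where ⋆⋆X_{abcd} = (1/4) ε_{ab}{}^{pq} ε_{cd}{}^{rs} X_{pqrs} is the double Hodge dual. -/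
noncomputable section

/-- The Minkowski metric `η = diag(+1,−1,−1,−1)` on `ℝ⁴`.  Its inverse has the
same components, so `mink` is also used to raise indices. -/
def mink : Fin 4 → Fin 4 → ℝ :=
  fun a b => if a = b then (if a = 0 then 1 else -1) else 0

/-- The totally antisymmetric Levi-Civita tensor with all indices down and
`ε₀₁₂₃ = +1`, via the Vandermonde-product formula. -/
def lev : Fin 4 → Fin 4 → Fin 4 → Fin 4 → ℝ :=
  fun a b c d =>
    (((b : ℕ) : ℝ) - ((a : ℕ) : ℝ)) * (((c : ℕ) : ℝ) - ((a : ℕ) : ℝ)) *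
    (((d : ℕ) : ℝ) - ((a : ℕ) : ℝ)) * (((c : ℕ) : ℝ) - ((b : ℕ) : ℝ)) *
    (((d : ℕ) : ℝ) - ((b : ℕ) : ℝ)) * (((d : ℕ) : ℝ) - ((c : ℕ) : ℝ)) / 12

/-- `ε_{ab}{}^{pq}`: the Levi-Civita tensor with its last two indices raised
by the Minkowski metric. -/
def levUp (a b p q : Fin 4) : ℝ := ∑ r, ∑ s, mink p r * mink q s * lev a b r s

/-- The Kronecker delta on `Fin 4`. -/
def kd (a b : Fin 4) : ℝ := if a = b then 1 else 0

/-- Hodge dual `⋆F_{ab} = (1/2) ε_{ab}{}^{pq} F_{pq}` of a rank-2 tensor. -/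
def hodge2 (F : Fin 4 → Fin 4 → ℝ) (a b : Fin 4) : ℝ :=
  (1/2) * ∑ p, ∑ q, levUp a b p q * F p q

/-- Left Hodge dual `←⋆X_{abcd} = (1/2) ε_{ab}{}^{pq} X_{pqcd}`. -/
def leftD (X : Fin 4 → Fin 4 → Fin 4 → Fin 4 → ℝ) (a b c d : Fin 4) : ℝ :=
  (1/2) * ∑ p, ∑ q, levUp a b p q * X p q c d

/-- Right Hodge dual `→⋆X_{abcd} = (1/2) ε_{cd}{}^{pq} X_{abpq}`. -/
def rightD (X : Fin 4 → Fin 4 → Fin 4 → Fin 4 → ℝ) (a b c d : Fin 4) : ℝ :=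
  (1/2) * ∑ p, ∑ q, levUp c d p q * X a b p q

/-- Double Hodge dual `⋆⋆X_{abcd} = (1/4) ε_{ab}{}^{pq} ε_{cd}{}^{rs} X_{pqrs}`. -/
def dblD (X : Fin 4 → Fin 4 → Fin 4 → Fin 4 → ℝ) (a b c d : Fin 4) : ℝ :=
  (1/4) * ∑ p, ∑ q, ∑ r, ∑ s, levUp a b p q * levUp c d r s * X p q r s

/-- First trace `X_{ac} = η^{bd} X_{abcd}` of a (2,2) double form. -/
def tr1 (X : Fin 4 → Fin 4 → Fin 4 → Fin 4 → ℝ) (a c : Fin 4) : ℝ :=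
  ∑ b, ∑ d, mink b d * X a b c d

/-- Second trace `X = η^{ac} X_{ac}` of a (2,2) double form. -/
def tr2 (X : Fin 4 → Fin 4 → Fin 4 → Fin 4 → ℝ) : ℝ :=
  ∑ a, ∑ c, mink a c * tr1 X a c

/-- Hatted (trace-free) tensor `X̂_{ab} = X_{ab} − (1/4) X η_{ab}`. -/
def hatT (X : Fin 4 → Fin 4 → Fin 4 → Fin 4 → ℝ) (a b : Fin 4) : ℝ :=
  tr1 X a b - (1/4) * tr2 X * mink a b

/-- Rank-2 tensor with both indices raised by the Minkowski metric. -/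
def up2 (F : Fin 4 → Fin 4 → ℝ) (a b : Fin 4) : ℝ :=
  ∑ p, ∑ q, mink a p * mink b q * F p q

/-- Rank-4 tensor with all indices raised by the Minkowski metric. -/
def up4 (X : Fin 4 → Fin 4 → Fin 4 → Fin 4 → ℝ) (a b c d : Fin 4) : ℝ :=
  ∑ p, ∑ q, ∑ r, ∑ s, mink a p * mink b q * mink c r * mink d s * X p q r s

/-! A product of two Levi-Civita symbols is, up to the sign of `det η = -1`, a `4 × 4` minor of the
metric. So `-4 ⋆⋆X` is the contraction of `X^{pqrs}` with the minor of `η` whose rows are `a, b, p,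
q` and whose columns are `c, d, r, s`. Of the 24 terms of this determinant, the four pairing `{a,
b}` with `{c, d}` produce the second trace, the four pairing `{a, b}` with `{r, s}` produce
`X_{cdab}`, and the remaining sixteen produce the first traces; by the antisymmetry of `X`, terms
that differ by `p ↔ q` or `r ↔ s` contribute equally. -/

open Matrix

section Contraction

variable {ι R : Type*} [CommRing R]

/-- Representatives, one from each orbit under `p ↔ q` and `r ↔ s`, of the terms in the Leibniz
expansion of the minor of `g` with rows `a, b, p, q` and columns `c, d, r, s`. The terms in which
`a, b` are paired with `c, d` are left out: they assemble into a product of two `2 × 2` minors. -/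
def crossPairingTerms (g : ι → ι → R) (a b c d p q r s : ι) : R :=
  g p c * g q d * (g a r * g b s) - g a c * (g p d * g b r * g q s) +
    g a d * (g p c * g b r * g q s) - g b d * (g p c * g a r * g q s) +
    g b c * (g p d * g a r * g q s)

lemma det_submatrix_eq_antisymmetrization (g : ι → ι → R) (a b c d p q r s : ι) :
    ((of g).submatrix ![a, b, p, q] ![c, d, r, s]).det =
      (g a c * g b d - g a d * g b c) * (g p r * g q s - g p s * g q r) +
        (crossPairingTerms g a b c d p q r s - crossPairingTerms g a b c d q p r s -
          (crossPairingTerms g a b c d p q s r - crossPairingTerms g a b c d q p s r)) := by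
  rw [det_succ_row_zero]
  simp only [Fin.sum_univ_four, det_fin_three, submatrix_apply, of_apply, Fin.succAbove,
    Fin.isValue, Fin.reduceSucc, Fin.reduceCastSucc, Fin.reduceLT, Fin.coe_ofNat_eq_mod,
    ↓reduceIte, cons_val, crossPairingTerms]
  ring

variable [Fintype ι]

lemma sum_sub_swap_mul_of_antisymm (f F : ι → ι → R) (hF : ∀ p q, F p q = -F q p) :
    ∑ p, ∑ q, (f p q - f q p) * F p q = 2 * ∑ p, ∑ q, f p q * F p q := by
  have hswap : ∑ p, ∑ q, f q p * F p q = -∑ p, ∑ q, f p q * F p q := by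
    rw [Finset.sum_comm]
    simp only [← Finset.sum_neg_distrib, ← mul_neg, ← hF]
  simp only [sub_mul, Finset.sum_sub_distrib, hswap]
  ring

lemma sum_sub_swap_sub_swap_mul_of_antisymm (f Y : ι → ι → ι → ι → R)
    (hleft : ∀ p q r s, Y p q r s = -Y q p r s) (hright : ∀ p q r s, Y p q r s = -Y p q s r) :
    ∑ p, ∑ q, ∑ r, ∑ s, (f p q r s - f q p r s - (f p q s r - f q p s r)) * Y p q r s =
      4 * ∑ p, ∑ q, ∑ r, ∑ s, f p q r s * Y p q r s := by
  have hinner (p q : ι) :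
      ∑ r, ∑ s, (f p q r s - f q p r s - (f p q s r - f q p s r)) * Y p q r s =
        2 * ∑ r, ∑ s, (f p q r s - f q p r s) * Y p q r s :=
    sum_sub_swap_mul_of_antisymm (fun r s => f p q r s - f q p r s) (Y p q) (hright p q)
  have hswap : ∑ p, ∑ q, ∑ r, ∑ s, f q p r s * Y p q r s =
      -∑ p, ∑ q, ∑ r, ∑ s, f p q r s * Y p q r s := by
    rw [Finset.sum_comm]
    simp only [← Finset.sum_neg_distrib, ← mul_neg, ← hleft]
  simp only [hinner, ← Finset.mul_sum]
  simp only [sub_mul, Finset.sum_sub_distrib, hswap]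
  ring

/-- The tensor `g_{pa} g_{qb} g_{cr} g_{ds} Y^{pqrs}`: all four indices of `Y` are lowered with
`g`. -/
def lowerAll (g : ι → ι → R) (Y : ι → ι → ι → ι → R) (a b c d : ι) : R :=
  ∑ p, ∑ q, ∑ r, ∑ s, g p a * g q b * (g c r * g d s) * Y p q r s

/-- The first trace `g_{pa} g_{cr} g_{qs} Y^{pqrs}` of a contravariant double form `Y`, with its
two free indices lowered. -/
def lowerTrace (g : ι → ι → R) (Y : ι → ι → ι → ι → R) (a c : ι) : R :=
  ∑ p, ∑ q, ∑ r, ∑ s, g p a * g c r * g q s * Y p q r s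

/-- The second trace `g_{pr} g_{qs} Y^{pqrs}` of a contravariant double form `Y`. -/
def fullTrace (g : ι → ι → R) (Y : ι → ι → ι → ι → R) : R :=
  ∑ p, ∑ q, ∑ r, ∑ s, g p r * g q s * Y p q r s

lemma sum_crossPairingTerms_mul (g : ι → ι → R) (Y : ι → ι → ι → ι → R) (a b c d : ι) :
    ∑ p, ∑ q, ∑ r, ∑ s, crossPairingTerms g a b c d p q r s * Y p q r s =
      lowerAll g Y c d a b - (g a c * lowerTrace g Y d b - g a d * lowerTrace g Y c b +
        g b d * lowerTrace g Y c a - g b c * lowerTrace g Y d a) := by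
  simp only [crossPairingTerms, lowerAll, lowerTrace, add_mul, sub_mul, Finset.sum_add_distrib,
    Finset.sum_sub_distrib, Finset.mul_sum, mul_assoc]
  ring

theorem sum_det_submatrix_mul (g : ι → ι → R) (Y : ι → ι → ι → ι → R)
    (hleft : ∀ p q r s, Y p q r s = -Y q p r s) (hright : ∀ p q r s, Y p q r s = -Y p q s r)
    (a b c d : ι) :
    ∑ p, ∑ q, ∑ r, ∑ s, ((of g).submatrix ![a, b, p, q] ![c, d, r, s]).det * Y p q r s =
      2 * (g a c * g b d - g a d * g b c) * fullTrace g Y +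
        4 * (lowerAll g Y c d a b - (g a c * lowerTrace g Y d b - g a d * lowerTrace g Y c b +
          g b d * lowerTrace g Y c a - g b c * lowerTrace g Y d a)) := by
  have htrace : ∑ p, ∑ q, ∑ r, ∑ s, (g p r * g q s - g p s * g q r) * Y p q r s =
      2 * fullTrace g Y := by
    simp only [fullTrace, sum_sub_swap_mul_of_antisymm (fun r s => g _ r * g _ s) _ (hright _ _),
      Finset.mul_sum]
  simp only [det_submatrix_eq_antisymmetrization, add_mul, mul_assoc (_ - _),
    Finset.sum_add_distrib, ← Finset.mul_sum, htrace]
  rw [sum_sub_swap_sub_swap_mul_of_antisymm _ Y hleft hright, sum_crossPairingTerms_mul]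
  ring

end Contraction

section LeviCivita

variable {n R : Type*} [Fintype n] [DecidableEq n] [CommRing R]

lemma det_submatrix_id_right (M : Matrix n n R) (v : n → n) :
    (M.submatrix v id).det = ((1 : Matrix n n R).submatrix v id).det * M.det := by
  rw [← det_mul, ← Equiv.coe_refl, one_submatrix_mul]
  rfl

lemma det_submatrix_eq_det_one_submatrix_mul (M : Matrix n n R) (v w : n → n) :
    (M.submatrix v w).det = ((1 : Matrix n n R).submatrix v id).det *
      ((1 : Matrix n n R).submatrix w id).det * M.det := by
  calc (M.submatrix v w).det = ((M.submatrix id w).submatrix v id).det := rfl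
    _ = ((1 : Matrix n n R).submatrix v id).det * (Mᵀ.submatrix w id).det := by
      rw [det_submatrix_id_right, ← det_transpose (M.submatrix id w), transpose_submatrix]
    _ = _ := by rw [det_submatrix_id_right Mᵀ w, det_transpose, mul_assoc]

lemma lev_eq_det_one_submatrix (a b c d : Fin 4) :
    lev a b c d = ((1 : Matrix (Fin 4) (Fin 4) ℝ).submatrix ![a, b, c, d] id).det := by
  let V : Matrix (Fin 4) (Fin 4) ℝ := vandermonde fun i => (i : ℝ)
  have hV : V.det = 12 := by
    simp [V, det_vandermonde_id_eq_superFactorial, Nat.superFactorial, Nat.factorial]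
  have hlev : (V.submatrix ![a, b, c, d] id).det = 12 * lev a b c d := by
    have hsub : V.submatrix ![a, b, c, d] id =
        vandermonde fun i => ((![a, b, c, d] i : ℕ) : ℝ) := rfl
    rw [hsub, det_vandermonde]
    simp only [Fin.prod_univ_succ, Fin.prod_univ_zero, Fin.prod_Ioi_zero, Fin.prod_Ioi_succ,
      cons_val_zero, cons_val_succ, lev]
    ring
  rw [det_submatrix_id_right, hV] at hlev
  linarith

end LeviCivita

lemma mink_comm (a b : Fin 4) : mink a b = mink b a := by
  by_cases hab : a = b <;> simp [mink, hab, Ne.symm]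

lemma sum_mink_mul (a : Fin 4) (f : Fin 4 → ℝ) : ∑ p, mink a p * f p = mink a a * f a :=
  Finset.sum_eq_single a (fun p _ hp => by simp [mink, hp.symm]) (by simp)

lemma mink_self_mul_cancel (a : Fin 4) (x : ℝ) : mink a a * (mink a a * x) = x := by
  by_cases ha : a = 0 <;> simp [mink, ha]

lemma det_mink : (of mink).det = -1 := by
  have hdiag : of mink = diagonal fun a => mink a a := by
    ext a b
    by_cases hab : a = b <;> simp [hab, mink]
  rw [hdiag, det_diagonal]
  simp [Fin.prod_univ_four, mink]

lemma lev_mul_lev (a b p q c d r s : Fin 4) :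
    lev a b p q * lev c d r s = -((of mink).submatrix ![a, b, p, q] ![c, d, r, s]).det := by
  rw [det_submatrix_eq_det_one_submatrix_mul, det_mink, lev_eq_det_one_submatrix,
    lev_eq_det_one_submatrix]
  ring

lemma levUp_eq_mink_mul_lev (a b p q : Fin 4) :
    levUp a b p q = mink p p * mink q q * lev a b p q := by
  simp only [levUp, mul_assoc, ← Finset.mul_sum, sum_mink_mul]

lemma up4_eq_mink_mul (X : Fin 4 → Fin 4 → Fin 4 → Fin 4 → ℝ) (a b c d : Fin 4) :
    up4 X a b c d = mink a a * mink b b * mink c c * mink d d * X a b c d := by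
  simp only [up4, mul_assoc, ← Finset.mul_sum, sum_mink_mul]

lemma lowerAll_up4 (X : Fin 4 → Fin 4 → Fin 4 → Fin 4 → ℝ) : lowerAll mink (up4 X) = X := by
  funext a b c d
  simp only [lowerAll, up4_eq_mink_mul, mink_comm _ a, mink_comm _ b, mul_assoc, ← Finset.mul_sum,
    sum_mink_mul]
  simp only [mul_left_comm, mink_self_mul_cancel]

lemma lowerTrace_up4 (X : Fin 4 → Fin 4 → Fin 4 → Fin 4 → ℝ) :
    lowerTrace mink (up4 X) = tr1 X := by
  funext a c
  simp only [lowerTrace, tr1, up4_eq_mink_mul, mink_comm _ a, mul_assoc, ← Finset.mul_sum,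
    sum_mink_mul]
  simp only [Finset.mul_sum, mul_left_comm, mink_self_mul_cancel]

lemma fullTrace_up4 (X : Fin 4 → Fin 4 → Fin 4 → Fin 4 → ℝ) :
    fullTrace mink (up4 X) = tr2 X := by
  simp only [fullTrace, tr2, tr1, up4_eq_mink_mul, mul_assoc, ← Finset.mul_sum, sum_mink_mul]
  simp only [Finset.mul_sum, mul_left_comm, mink_self_mul_cancel]

lemma dblD_eq_sum_lev_mul_lev (X : Fin 4 → Fin 4 → Fin 4 → Fin 4 → ℝ) (a b c d : Fin 4) :
    dblD X a b c d =
      1 / 4 * ∑ p, ∑ q, ∑ r, ∑ s, lev a b p q * lev c d r s * up4 X p q r s := by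
  simp only [dblD, levUp_eq_mink_mul_lev, up4_eq_mink_mul]
  congr! 5
  ring

lemma dblD_eq_traces_sub_swap (X : Fin 4 → Fin 4 → Fin 4 → Fin 4 → ℝ)
    (hleft : ∀ a b c d, X a b c d = -X b a c d) (hright : ∀ a b c d, X a b c d = -X a b d c)
    (a b c d : Fin 4) :
    dblD X a b c d = mink a c * tr1 X d b - mink a d * tr1 X c b + mink b d * tr1 X c a -
      mink b c * tr1 X d a - 1 / 2 * (mink a c * mink b d - mink a d * mink b c) * tr2 X -
      X c d a b := by
  have hup_left (p q r s) : up4 X p q r s = -up4 X q p r s := by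
    rw [up4_eq_mink_mul, up4_eq_mink_mul, hleft]
    ring
  have hup_right (p q r s) : up4 X p q r s = -up4 X p q s r := by
    rw [up4_eq_mink_mul, up4_eq_mink_mul, hright]
    ring
  simp only [dblD_eq_sum_lev_mul_lev, lev_mul_lev, neg_mul, Finset.sum_neg_distrib]
  rw [sum_det_submatrix_mul mink _ hup_left hup_right, lowerAll_up4, lowerTrace_up4, fullTrace_up4]
  ring

/-- Generalised Ruse–Lanczos identity for an arbitrary (2,2) double form on
4-dimensional Minkowski space. -/
theorem ruse_lanczos (X : Fin 4 → Fin 4 → Fin 4 → Fin 4 → ℝ)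
    (h1 : ∀ a b c d, X a b c d = -X b a c d)
    (h2 : ∀ a b c d, X a b c d = -X a b d c) :
    ∀ a b c d, dblD X a b c d + X c d a b =
      mink a c * hatT X d b - mink a d * hatT X c b +
      mink b d * hatT X c a - mink b c * hatT X d a := by
  intro a b c d
  rw [dblD_eq_traces_sub_swap X h1 h2]
  simp only [hatT, mink_comm c a, mink_comm c b, mink_comm d a, mink_comm d b]
  ring
end
end
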